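/- Let E be a complex Hilbert space, A a bounded linear operator on E with ‖A‖ ≤ 1, and b, v ∈ E such that A*b = (I − A*A)^{1/2} v. Then the kernel (z,w) ↦ exp(‖b‖² + ‖v‖²)·exp(⟨z,w⟩) − exp(⟨Az + b, Aw + b⟩) is a positive semi-definite kernel on E. -/

import Mathlib

open scoped InnerProductSpace ComplexOrder
open ContinuousLinearMap

/-- A function `Φ : X × X → ℂ` is a positive semi-definite kernel if for all finite families
of points `x j` and complex numbers `c j`, the sum `∑_{j,l} c j * conj (c l) * Φ (x l) (x j)`
is a nonnegative real number (expressed via the partial order on `ℂ`). -/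
def IsPSDKernel {X : Type*} (Φ : X → X → ℂ) : Prop :=
  ∀ (m : ℕ) (x : Fin m → X) (c : Fin m → ℂ),
    0 ≤ ∑ j : Fin m, ∑ l : Fin m, c j * (starRingEnd ℂ) (c l) * Φ (x l) (x j)

/-- A bounded operator is positive: self-adjoint and with nonnegative quadratic form. -/
def IsPosOp {E : Type*} [NormedAddCommGroup E] [InnerProductSpace ℂ E]
    (T : E →L[ℂ] E) : Prop :=
  (∀ x y : E, ⟪T x, y⟫_ℂ = ⟪x, T y⟫_ℂ) ∧ ∀ x : E, 0 ≤ ⟪T x, x⟫_ℂ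

/-- `S` is the (unique) positive square root of `T`. -/
def IsPosSqrtOf {E : Type*} [NormedAddCommGroup E] [InnerProductSpace ℂ E]
    (S T : E →L[ℂ] E) : Prop :=
  IsPosOp S ∧ S ∘L S = T

/-!
Since `S² = I - A*A`, the map `z ↦ (A z, S z)` is an isometry, and `A*b = S v` says that its range
is orthogonal to `(b, -v)`. Hence the exponent `‖b‖² + ‖v‖² + ⟨z, w⟩` splits as the sum of
`⟨A z + b, A w + b⟩` and the Gram kernel `⟨S z - v, S w - v⟩`. So the kernel of the theorem has the
form `exp (Φ + Ψ) - exp Φ = exp Φ * (exp Ψ - 1)` with `Φ` and `Ψ` positive semi-definite; both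
factors are power series in such kernels with nonnegative coefficients, and the Schur product
theorem applies.
-/

-- Unlike over `ℝ`, Hermitian symmetry comes for free from the quadratic form being real-valued.
open scoped Matrix in
theorem posSemidef_iff_forall_dotProduct_mulVec_nonneg {n : Type*} [Fintype n]
    {M : Matrix n n ℂ} : M.PosSemidef ↔ ∀ c : n → ℂ, 0 ≤ star c ⬝ᵥ M *ᵥ c := by
  classical
  rw [← Matrix.isPositive_toEuclideanLin_iff, LinearMap.isPositive_iff_complex]
  refine (WithLp.equiv 2 (n → ℂ)).forall_congr fun {c} => ?_
  have hinner : ⟪M.toEuclideanLin c, c⟫_ℂ = star (star c.ofLp ⬝ᵥ M *ᵥ c.ofLp) := by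
    rw [EuclideanSpace.inner_eq_star_dotProduct, Matrix.ofLp_toLpLin, Matrix.toLin'_apply,
      ← Matrix.star_dotProduct_star, star_star, dotProduct_comm]
  simp [hinner, Complex.nonneg_iff, Complex.ext_iff, and_comm, eq_comm (a := (0 : ℝ))]

section Kernel

variable {X : Type*} {Φ Ψ : X → X → ℂ}

open scoped Matrix in
theorem isPSDKernel_iff_posSemidef :
    IsPSDKernel Φ ↔
      ∀ (m : ℕ) (x : Fin m → X), (Matrix.of fun j l => Φ (x l) (x j)).PosSemidef := by
  have quadratic_form (m : ℕ) (x : Fin m → X) (c : Fin m → ℂ) :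
      c ⬝ᵥ (Matrix.of fun j l => Φ (x l) (x j)) *ᵥ star c =
        ∑ j, ∑ l, c j * (starRingEnd ℂ) (c l) * Φ (x l) (x j) := by
    simp only [dotProduct, Matrix.mulVec, Finset.mul_sum, Matrix.of_apply, Pi.star_apply,
      starRingEnd_apply, mul_assoc, mul_comm (star _)]
  simp only [IsPSDKernel, posSemidef_iff_forall_dotProduct_mulVec_nonneg, ← quadratic_form]
  exact forall₂_congr fun _ _ => star_involutive.surjective.forall.trans (by simp)

theorem isPSDKernel_inner {F : Type*} [SeminormedAddCommGroup F] [InnerProductSpace ℂ F]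
    (φ : X → F) : IsPSDKernel fun z w => ⟪φ w, φ z⟫_ℂ :=
  isPSDKernel_iff_posSemidef.2 fun _ x => Matrix.posSemidef_gram ℂ (φ ∘ x)

theorem isPSDKernel_one : IsPSDKernel fun _ _ : X => (1 : ℂ) := by
  simpa using isPSDKernel_inner fun _ : X => (1 : ℂ)

namespace IsPSDKernel

theorem add (hΦ : IsPSDKernel Φ) (hΨ : IsPSDKernel Ψ) :
    IsPSDKernel fun z w => Φ z w + Ψ z w := fun m x c => by
  simpa only [mul_add, Finset.sum_add_distrib] using add_nonneg (hΦ m x c) (hΨ m x c)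

theorem const_mul (hΦ : IsPSDKernel Φ) {r : ℂ} (hr : 0 ≤ r) :
    IsPSDKernel fun z w => r * Φ z w := fun m x c => by
  simpa only [Finset.mul_sum, mul_left_comm r] using mul_nonneg hr (hΦ m x c)

theorem mul (hΦ : IsPSDKernel Φ) (hΨ : IsPSDKernel Ψ) :
    IsPSDKernel fun z w => Φ z w * Ψ z w := by
  rw [isPSDKernel_iff_posSemidef] at hΦ hΨ ⊢
  exact fun m x => (hΦ m x).hadamard (hΨ m x)

theorem pow (hΦ : IsPSDKernel Φ) (n : ℕ) : IsPSDKernel fun z w => Φ z w ^ n := by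
  induction n with
  | zero => simpa only [pow_zero] using isPSDKernel_one
  | succ n ih => simpa only [pow_succ] using ih.mul hΦ

theorem of_hasSum {ι : Type*} {Φ : ι → X → X → ℂ} (hΦ : ∀ i, IsPSDKernel (Φ i))
    (hsum : ∀ z w, HasSum (fun i => Φ i z w) (Ψ z w)) : IsPSDKernel Ψ := fun m x c =>
  HasSum.nonneg (fun i => hΦ i m x c) <|
    hasSum_sum fun _ _ => hasSum_sum fun _ _ => (hsum _ _).mul_left _

theorem exp_sub_one (hΦ : IsPSDKernel Φ) : IsPSDKernel fun z w => Complex.exp (Φ z w) - 1 := by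
  refine of_hasSum
    (fun n => (hΦ.pow (n + 1)).const_mul (r := ((n + 1).factorial : ℂ)⁻¹) (by positivity))
    fun z w => ?_
  have hexp := NormedSpace.expSeries_div_hasSum_exp (Φ z w)
  rw [← Complex.exp_eq_exp_ℂ, ← hasSum_nat_add_iff' 1] at hexp
  simpa [div_eq_inv_mul] using hexp

theorem exp (hΦ : IsPSDKernel Φ) : IsPSDKernel fun z w => Complex.exp (Φ z w) := by
  simpa only [sub_add_cancel] using hΦ.exp_sub_one.add isPSDKernel_one

theorem exp_add_sub_exp (hΦ : IsPSDKernel Φ) (hΨ : IsPSDKernel Ψ) :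
    IsPSDKernel fun z w => Complex.exp (Φ z w + Ψ z w) - Complex.exp (Φ z w) := by
  simpa only [Complex.exp_add, mul_sub, mul_one] using hΦ.exp.mul hΨ.exp_sub_one

end IsPSDKernel

end Kernel

section JointIsometry

variable {𝕜 E F G : Type*} [RCLike 𝕜]
  [SeminormedAddCommGroup E] [InnerProductSpace 𝕜 E]
  [SeminormedAddCommGroup F] [InnerProductSpace 𝕜 F]
  [SeminormedAddCommGroup G] [InnerProductSpace 𝕜 G]

theorem inner_map_add_inner_map_of_norm_sq {A : E →ₗ[𝕜] F} {S : E →ₗ[𝕜] G}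
    (hAS : ∀ z, ‖A z‖ ^ 2 + ‖S z‖ ^ 2 = ‖z‖ ^ 2) (w z : E) :
    ⟪A w, A z⟫_𝕜 + ⟪S w, S z⟫_𝕜 = ⟪w, z⟫_𝕜 := by
  simp only [inner_eq_sum_norm_sq_div_four, ← map_add, ← map_sub, ← map_smul, ← RCLike.ofReal_pow,
    ← hAS]
  push_cast
  ring

theorem inner_map_add_add_inner_map_sub {A : E →ₗ[𝕜] F} {S : E →ₗ[𝕜] G}
    (hAS : ∀ z, ‖A z‖ ^ 2 + ‖S z‖ ^ 2 = ‖z‖ ^ 2) {b : F} {v : G}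
    (hbv : ∀ z, ⟪A z, b⟫_𝕜 = ⟪S z, v⟫_𝕜) (w z : E) :
    ⟪A w + b, A z + b⟫_𝕜 + ⟪S w - v, S z - v⟫_𝕜 =
      ((‖b‖ ^ 2 + ‖v‖ ^ 2 : ℝ) : 𝕜) + ⟪w, z⟫_𝕜 := by
  have hvb : ⟪b, A z⟫_𝕜 = ⟪v, S z⟫_𝕜 := by
    rw [← inner_conj_symm, hbv, inner_conj_symm]
  simp only [inner_add_left, inner_add_right, inner_sub_left, inner_sub_right, hbv, hvb,
    inner_self_eq_norm_sq_to_K, ← inner_map_add_inner_map_of_norm_sq hAS w z]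
  push_cast
  ring

end JointIsometry

theorem IsPosSqrtOf.norm_sq_add_norm_sq {E F : Type*}
    [NormedAddCommGroup E] [InnerProductSpace ℂ E] [CompleteSpace E]
    [NormedAddCommGroup F] [InnerProductSpace ℂ F] [CompleteSpace F]
    {A : E →L[ℂ] F} {S : E →L[ℂ] E} (hS : IsPosSqrtOf S (1 - adjoint A ∘L A)) (z : E) :
    ‖A z‖ ^ 2 + ‖S z‖ ^ 2 = ‖z‖ ^ 2 := by
  obtain ⟨⟨hsymm, -⟩, hsq⟩ := hS
  have hSS : S (S z) = z - adjoint A (A z) := by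
    simpa using DFunLike.congr_fun hsq z
  have hinner : ⟪S z, S z⟫_ℂ = ⟪z, z⟫_ℂ - ⟪A z, A z⟫_ℂ := by
    rw [hsymm, hSS, inner_sub_right, adjoint_inner_right]
  simp only [inner_self_eq_norm_sq_to_K] at hinner
  norm_cast at hinner
  linarith

theorem statement2_general {E F G : Type*} [SeminormedAddCommGroup E] [InnerProductSpace ℂ E]
    [SeminormedAddCommGroup F] [InnerProductSpace ℂ F]
    [SeminormedAddCommGroup G] [InnerProductSpace ℂ G]
    (A : E →ₗ[ℂ] F) (S : E →ₗ[ℂ] G) (hAS : ∀ z, ‖A z‖ ^ 2 + ‖S z‖ ^ 2 = ‖z‖ ^ 2)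
    (b : F) (v : G) (hbv : ∀ z, ⟪A z, b⟫_ℂ = ⟪S z, v⟫_ℂ) :
    IsPSDKernel fun z w : E =>
      (Real.exp (‖b‖ ^ 2 + ‖v‖ ^ 2) : ℂ) * Complex.exp ⟪w, z⟫_ℂ -
        Complex.exp ⟪A w + b, A z + b⟫_ℂ := by
  have hkernel := (isPSDKernel_inner fun z => A z + b).exp_add_sub_exp
    (isPSDKernel_inner fun z => S z - v)
  simpa only [inner_map_add_add_inner_map_sub hAS hbv, Complex.exp_add, Complex.coe_algebraMap,
    ← Complex.ofReal_exp] using hkernel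

/-- if `‖A‖ ≤ 1` and `A* b = (I − A*A)^{1/2} v`, then the kernel
`(z,w) ↦ exp(‖b‖² + ‖v‖²) exp⟨z,w⟩ − exp⟨A z + b, A w + b⟩` is positive semi-definite. -/
theorem statement2 {E : Type*} [NormedAddCommGroup E] [InnerProductSpace ℂ E]
    [CompleteSpace E] (A : E →L[ℂ] E) (hA : ‖A‖ ≤ 1) (b v : E)
    (S : E →L[ℂ] E) (hS : IsPosSqrtOf S (1 - (adjoint A) ∘L A))
    (hbv : adjoint A b = S v) :
    IsPSDKernel (fun z w : E =>
      (Real.exp (‖b‖ ^ 2 + ‖v‖ ^ 2) : ℂ) * Complex.exp ⟪w, z⟫_ℂ -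
        Complex.exp ⟪A w + b, A z + b⟫_ℂ) :=
  statement2_general A.toLinearMap S.toLinearMap hS.norm_sq_add_norm_sq b v fun z => by
    rw [coe_coe, coe_coe, ← adjoint_inner_right, hbv, hS.1.1]
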